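/- For all n ≥ 0, T_2(9n+7) ≡ 0 (mod 24). -/

import Mathlib

noncomputable def Tcount (ℓ k n : ℕ) : ℕ :=
  Nat.card {f : Fin k → Σ m : ℕ, Nat.Partition m //
    (∑ i, (f i).1) = n ∧ ∀ i, ∀ p ∈ (f i).2.parts, ¬ ℓ ∣ p}

/-!
Write `E(q) = ∏ (1 - qⁱ)`, `φ(-q) = 1 + 2 S(q)` with `S(q) = ∑_{s ≥ 1} (-1)ˢ q^(s²)`, and
`ψ(q) = ∑_{s ≥ 0} q^(s(s+1)/2)`. The generating function of `2`-regular partitions is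
`D(q) = E(q²) / E(q)`. Gauss' identities `φ(-q) = E(q)² / E(q²)` and `ψ(q) = E(q²)² / E(q)`, which
are limits of finite identities of Shanks, give `D(q)³ φ(-q) = ψ(q)` and, together with
`E(-q) E(q) E(q⁴) = E(q²)³`, also `ψ(q) φ(-q) = ψ(-q) φ(-q²)`.
Since `S(q)² ≡ S(q²)` modulo `2`, one has `φ(-q)² ≡ 2 φ(-q) φ(-q²) - 1` modulo `8`, and multiplying
by `D(q)³` yields `D(q)³ ≡ φ(-q²) (2 ψ(q) - ψ(-q))` modulo `8`. An exponent `n` occurring on the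
right-hand side is `2 b² + k(k+1)/2` for some `b` and `k`, that is, `8 n + 1 = (4 b)² + (2 k + 1)²`.
Hence `8 ∣ T₂(n)` unless `8 n + 1` is a sum of two squares, which never happens for
`8 n + 1 ≡ 3` modulo `9`. Finally `D(q)³ ≡ D(q³)` modulo `3`, so that `3 ∣ T₂(n)` unless `3 ∣ n`.
-/

open Finset Filter PowerSeries Topology

open scoped PowerSeries.WithPiTopology

section FiniteGaussIdentities

variable {R : Type*} [CommRing R] (q : R)

/-- The finite Euler product `(1 - q ^ (m + 1)) ⋯ (1 - q ^ n)`; the case `m = 0` is the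
`q`-Pochhammer symbol `(q; q)_n`. -/
def eulerProd (m n : ℕ) : R := ∏ j ∈ Ico m n, (1 - q ^ (j + 1))

/-- The `q`-Pochhammer symbol `(-q; q)_n = (1 + q) ⋯ (1 + q ^ n)`. -/
def distinctProd (n : ℕ) : R := ∏ j ∈ range n, (1 + q ^ (j + 1))

/-- The `q`-Pochhammer symbol `(q; q²)_n = (1 - q) (1 - q ^ 3) ⋯ (1 - q ^ (2 * n - 1))`. -/
def oddProd (n : ℕ) : R := ∏ j ∈ range n, (1 - q ^ (2 * j + 1))

/-- The partial sum `1 + 2 ∑_{s = 1}^n (-1)ˢ q ^ (s²)` of Gauss' theta function `φ(-q)`. -/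
def squareSum (n : ℕ) : R := 1 + 2 * ∑ s ∈ range n, (-1) ^ (s + 1) * q ^ ((s + 1) ^ 2)

/-- The partial sum of the first `n` terms of Gauss' theta function
`ψ(q) = ∑_{s ≥ 0} q ^ (s * (s + 1) / 2)`. -/
def triangleSum (n : ℕ) : R := ∑ s ∈ range n, q ^ (s * (s + 1) / 2)

/-- The error term in Shanks' finite form of Gauss' identity for squares. -/
def squareError (n : ℕ) : R :=
  ∑ t ∈ range n, 2 * (-1) ^ (t + 1) * distinctProd q t * eulerProd q (t + 1) n *
    q ^ ((t + 1) * (n + 1))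

/-- The right-hand side of Shanks' finite form of Gauss' identity for triangular numbers; its
term `s = 0` is the main one. -/
def triangleExpansion (n : ℕ) : R :=
  ∑ s ∈ range (n + 1), oddProd q s * eulerProd (q ^ 2) s n * q ^ (s * (2 * n + 1))

lemma eulerProd_self (n : ℕ) : eulerProd q n n = 1 := by simp [eulerProd]

variable {m n : ℕ}

lemma eulerProd_succ_right (h : m ≤ n) :
    eulerProd q m (n + 1) = eulerProd q m n * (1 - q ^ (n + 1)) :=
  prod_Ico_succ_top h _

lemma eulerProd_eq_mul_succ_left (h : m < n) :
    eulerProd q m n = (1 - q ^ (m + 1)) * eulerProd q (m + 1) n :=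
  prod_eq_prod_Ico_succ_bot h _

variable (m n)

lemma distinctProd_succ : distinctProd q (n + 1) = distinctProd q n * (1 + q ^ (n + 1)) :=
  prod_range_succ _ _

lemma oddProd_succ : oddProd q (n + 1) = oddProd q n * (1 - q ^ (2 * n + 1)) :=
  prod_range_succ _ _

lemma squareSum_succ :
    squareSum q (n + 1) = squareSum q n + 2 * ((-1) ^ (n + 1) * q ^ ((n + 1) ^ 2)) := by
  simp only [squareSum, sum_range_succ]
  ring

lemma triangleSum_two_mul_add_three :
    triangleSum q (2 * (n + 1) + 1) =
      triangleSum q (2 * n + 1) + q ^ ((n + 1) * (2 * n + 1)) + q ^ ((n + 1) * (2 * n + 3)) := by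
  have odd_triangle : (2 * n + 1) * (2 * n + 1 + 1) / 2 = (n + 1) * (2 * n + 1) :=
    Nat.div_eq_of_eq_mul_right two_pos (by ring)
  have even_triangle : (2 * n + 2) * (2 * n + 2 + 1) / 2 = (n + 1) * (2 * n + 3) :=
    Nat.div_eq_of_eq_mul_right two_pos (by ring)
  rw [show 2 * (n + 1) + 1 = 2 * n + 1 + 1 + 1 by ring, triangleSum, sum_range_succ,
    sum_range_succ, odd_triangle, even_triangle, triangleSum]

lemma distinctProd_mul_eulerProd :
    distinctProd q n * eulerProd q 0 n = eulerProd (q ^ 2) 0 n := by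
  simp only [distinctProd, eulerProd, Nat.Ico_zero_eq_range, ← prod_mul_distrib]
  exact prod_congr rfl fun _ _ ↦ by ring

lemma oddProd_mul_eulerProd_sq :
    oddProd q n * eulerProd (q ^ 2) 0 n = eulerProd q 0 (2 * n) := by
  induction n with
  | zero => simp [oddProd, eulerProd]
  | succ n ih =>
    rw [show 2 * (n + 1) = 2 * n + 1 + 1 by ring]
    simp only [eulerProd_succ_right _ (Nat.zero_le _), oddProd_succ, ← ih]
    ring

lemma oddProd_neg_mul_oddProd : oddProd (-q) n * oddProd q n = oddProd (q ^ 2) n := by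
  simp only [oddProd, ← prod_mul_distrib]
  refine prod_congr rfl fun j _ ↦ ?_
  rw [(odd_two_mul_add_one j).neg_pow]
  ring

lemma eulerProd_neg_mul_eulerProd_mul_eulerProd_pow_four :
    eulerProd (-q) 0 (2 * n) * eulerProd q 0 (2 * n) * eulerProd (q ^ 4) 0 n =
      eulerProd (q ^ 2) 0 n ^ 2 * eulerProd (q ^ 2) 0 (2 * n) := by
  rw [← oddProd_mul_eulerProd_sq (-q), ← oddProd_mul_eulerProd_sq q,
    ← oddProd_mul_eulerProd_sq (q ^ 2), ← oddProd_neg_mul_oddProd, neg_sq, ← pow_mul]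
  ring

lemma sum_squareError_telescope {t : ℕ} (ht : t ≤ n) :
    ∑ s ∈ range t, 2 * (-1) ^ (s + 1) * distinctProd q s * eulerProd q (s + 1) n *
        ((1 - q ^ (n + 1)) * q ^ ((s + 1) * (n + 2)) -
          (1 + q ^ (n + 1)) * q ^ ((s + 1) * (n + 1))) =
      2 * q ^ (n + 1) * eulerProd q 0 n -
        2 * (-1) ^ t * distinctProd q t * eulerProd q t n * q ^ ((t + 1) * (n + 1)) := by
  induction t with
  | zero => simp [distinctProd]; ring
  | succ t ih =>
    rw [sum_range_succ, ih (by lia), eulerProd_eq_mul_succ_left q (show t < n by lia),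
      distinctProd_succ]
    ring

lemma squareError_succ :
    squareError q (n + 1) = (1 + q ^ (n + 1)) * squareError q n +
      2 * q ^ (n + 1) * eulerProd q 0 n +
      2 * (-1) ^ (n + 1) * q ^ ((n + 1) ^ 2) * distinctProd q (n + 1) := by
  have split : squareError q (n + 1) - (1 + q ^ (n + 1)) * squareError q n =
      ∑ s ∈ range n, 2 * (-1) ^ (s + 1) * distinctProd q s * eulerProd q (s + 1) n *
        ((1 - q ^ (n + 1)) * q ^ ((s + 1) * (n + 2)) -
          (1 + q ^ (n + 1)) * q ^ ((s + 1) * (n + 1))) +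
      2 * (-1) ^ (n + 1) * distinctProd q n * q ^ ((n + 1) * (n + 2)) := by
    rw [squareError, sum_range_succ, eulerProd_self, squareError, mul_sum, add_sub_right_comm,
      ← sum_sub_distrib]
    congr 1
    · refine sum_congr rfl fun s hs ↦ ?_
      rw [eulerProd_succ_right q (mem_range.1 hs)]
      ring
    · ring
  rw [sum_squareError_telescope q n le_rfl, eulerProd_self] at split
  rw [distinctProd_succ]
  linear_combination split

lemma distinctProd_mul_squareSum :
    distinctProd q n * squareSum q n = eulerProd q 0 n + squareError q n := by
  induction n with
  | zero => simp [distinctProd, squareSum, eulerProd, squareError]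
  | succ n ih =>
    rw [squareSum_succ, squareError_succ, distinctProd_succ, eulerProd_succ_right q (Nat.zero_le n)]
    linear_combination (1 + q ^ (n + 1)) * ih

lemma sum_triangleExpansion_telescope {t : ℕ} (ht : t ≤ n) :
    ∑ s ∈ range t, oddProd q s * eulerProd (q ^ 2) s n *
        ((1 - q ^ (2 * n + 2)) * q ^ (s * (2 * n + 3)) -
          (1 - q ^ (2 * n + 1)) * q ^ (s * (2 * n + 1))) =
      oddProd q t * eulerProd (q ^ 2) t n * (1 - q ^ (2 * t)) * q ^ (t * (2 * n + 1)) := by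
  induction t with
  | zero => simp
  | succ t ih =>
    rw [sum_range_succ, ih (by lia), eulerProd_eq_mul_succ_left (q ^ 2) (show t < n by lia),
      oddProd_succ]
    ring

lemma triangleExpansion_succ :
    triangleExpansion q (n + 1) = (1 - q ^ (2 * n + 1)) * triangleExpansion q n +
      oddProd q (n + 1) * (q ^ ((n + 1) * (2 * n + 1)) + q ^ ((n + 1) * (2 * n + 3))) := by
  have split : triangleExpansion q (n + 1) - (1 - q ^ (2 * n + 1)) * triangleExpansion q n =
      ∑ s ∈ range (n + 1), oddProd q s * eulerProd (q ^ 2) s n *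
        ((1 - q ^ (2 * n + 2)) * q ^ (s * (2 * n + 3)) -
          (1 - q ^ (2 * n + 1)) * q ^ (s * (2 * n + 1))) +
      oddProd q (n + 1) * q ^ ((n + 1) * (2 * n + 3)) := by
    rw [triangleExpansion, sum_range_succ, eulerProd_self, triangleExpansion, mul_sum,
      add_sub_right_comm, ← sum_sub_distrib]
    congr 1
    · refine sum_congr rfl fun s hs ↦ ?_
      rw [eulerProd_succ_right _ (mem_range_succ_iff.1 hs)]
      ring
    · ring
  rw [sum_range_succ, sum_triangleExpansion_telescope q n le_rfl, eulerProd_self,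
    oddProd_succ] at split
  rw [oddProd_succ]
  linear_combination split

lemma oddProd_mul_triangleSum :
    oddProd q n * triangleSum q (2 * n + 1) = triangleExpansion q n := by
  induction n with
  | zero => simp [oddProd, triangleSum, triangleExpansion, eulerProd]
  | succ n ih =>
    rw [triangleSum_two_mul_add_three, triangleExpansion_succ, ← ih, oddProd_succ]
    ring

lemma pow_dvd_squareError : q ^ n ∣ squareError q n :=
  dvd_sum fun t _ ↦ Dvd.dvd.mul_left (pow_dvd_pow q (by nlinarith)) _

lemma pow_dvd_triangleExpansion_sub : q ^ n ∣ triangleExpansion q n - eulerProd (q ^ 2) 0 n := by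
  have main_term : oddProd q 0 * eulerProd (q ^ 2) 0 n * q ^ (0 * (2 * n + 1)) =
      eulerProd (q ^ 2) 0 n := by simp [oddProd]
  rw [triangleExpansion, sum_range_succ', main_term, add_sub_cancel_right]
  exact dvd_sum fun s _ ↦ Dvd.dvd.mul_left (pow_dvd_pow q (by nlinarith)) _

lemma eulerProd_sq_mul_squareSum :
    eulerProd (q ^ 2) 0 n * squareSum q n =
      eulerProd q 0 n * (eulerProd q 0 n + squareError q n) := by
  rw [← distinctProd_mul_eulerProd, ← distinctProd_mul_squareSum]
  ring

lemma eulerProd_mul_triangleSum :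
    eulerProd q 0 (2 * n) * triangleSum q (2 * n + 1) =
      eulerProd (q ^ 2) 0 n * triangleExpansion q n := by
  rw [← oddProd_mul_eulerProd_sq, ← oddProd_mul_triangleSum]
  ring

end FiniteGaussIdentities

section FormalSeries

variable {R : Type*}

lemma coeff_prod_eq_sum_piAntidiag [CommSemiring R] {ι : Type*} [DecidableEq ι] (s : Finset ι)
    (f : ι → R⟦X⟧) (n : ℕ) :
    coeff n (∏ i ∈ s, f i) = ∑ l ∈ piAntidiag s n, ∏ i ∈ s, coeff (l i) (f i) := by
  rw [coeff_prod, finsuppAntidiag, sum_map]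
  exact sum_attach (piAntidiag s n) fun l ↦ ∏ i ∈ s, coeff (l i) (f i)

lemma natCast_dvd_iff_forall_natCast_dvd_coeff [CommSemiring R] {m : ℕ} {f : R⟦X⟧} :
    (m : R⟦X⟧) ∣ f ↔ ∀ n, (m : R) ∣ coeff n f := by
  have coeff_natCast_mul (n : ℕ) (g : R⟦X⟧) : coeff n ((m : R⟦X⟧) * g) = m * coeff n g := by
    rw [← map_natCast (C (R := R)), coeff_C_mul]
  constructor
  · rintro ⟨g, rfl⟩ n
    exact ⟨coeff n g, coeff_natCast_mul n g⟩
  · intro h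
    choose g hg using h
    exact ⟨mk g, PowerSeries.ext fun n ↦ by rw [coeff_natCast_mul, coeff_mk, hg]⟩

lemma pow_char_eq_expand (p : ℕ) [hp : Fact p.Prime] (f : (ZMod p)⟦X⟧) :
    f ^ p = expand p hp.out.ne_zero f := by
  have h : PowerSeries.map (frobenius (ZMod p) p) (expand p hp.out.ne_zero f) = f ^ p :=
    MvPowerSeries.map_frobenius_expand p hp.out.ne_zero
  rw [← h, ZMod.frobenius_zmod, PowerSeries.map_id, id]

lemma natCast_dvd_pow_sub_expand (p : ℕ) [hp : Fact p.Prime] (f : ℤ⟦X⟧) :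
    (p : ℤ⟦X⟧) ∣ f ^ p - expand p hp.out.ne_zero f := by
  have map_eq : PowerSeries.map (Int.castRingHom (ZMod p)) (f ^ p) =
      PowerSeries.map (Int.castRingHom (ZMod p)) (expand p hp.out.ne_zero f) := by
    rw [map_pow, map_expand, pow_char_eq_expand]
  refine natCast_dvd_iff_forall_natCast_dvd_coeff.2 fun n ↦ ?_
  rw [← ZMod.intCast_zmod_eq_zero_iff_dvd, map_sub, Int.cast_sub, sub_eq_zero]
  simpa only [coeff_map, eq_intCast] using congrArg (coeff n) map_eq

lemma natCast_dvd_coeff_pow {p : ℕ} (hp : p.Prime) {n : ℕ} (hn : ¬ p ∣ n) (f : ℤ⟦X⟧) :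
    (p : ℤ) ∣ coeff n (f ^ p) := by
  have := Fact.mk hp
  have h := natCast_dvd_iff_forall_natCast_dvd_coeff.1 (natCast_dvd_pow_sub_expand p f) n
  rwa [map_sub, coeff_expand_of_not_dvd _ _ _ hn, sub_zero] at h

lemma coeff_evalNegHom [CommRing R] (n : ℕ) (f : R⟦X⟧) :
    coeff n (evalNegHom f) = (-1) ^ n * coeff n f :=
  coeff_rescale f (-1) n

lemma evalNegHom_expand_of_even [CommRing R] {p : ℕ} (hp : p ≠ 0) (heven : Even p) (f : R⟦X⟧) :
    evalNegHom (expand p hp f) = expand p hp f := by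
  ext n
  rw [coeff_evalNegHom]
  by_cases h : p ∣ n
  · rw [(even_iff_two_dvd.2 (heven.two_dvd.trans h)).neg_one_pow, one_mul]
  · rw [coeff_expand_of_not_dvd _ _ _ h, mul_zero]

variable [TopologicalSpace R]

lemma continuous_of_continuous_coeff [Semiring R] {Y : Type*} [TopologicalSpace Y] {f : Y → R⟦X⟧}
    (hf : ∀ n, Continuous fun y ↦ coeff n (f y)) : Continuous f := by
  refine continuous_iff_continuousAt.2 fun y ↦ ?_
  exact (WithPiTopology.tendsto_iff_coeff_tendsto R f (𝓝 y) (f y)).2 fun n ↦ (hf n).continuousAt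

lemma continuous_expand [CommRing R] {p : ℕ} (hp : p ≠ 0) :
    Continuous fun f : R⟦X⟧ ↦ expand p hp f := by
  refine continuous_of_continuous_coeff fun n ↦ ?_
  simp only [coeff_expand]
  split_ifs
  · exact WithPiTopology.continuous_coeff R _
  · exact continuous_const

lemma continuous_evalNegHom [CommRing R] [ContinuousMul R] :
    Continuous (evalNegHom : R⟦X⟧ → R⟦X⟧) := by
  refine continuous_of_continuous_coeff fun n ↦ ?_
  simp only [coeff_evalNegHom]
  exact (WithPiTopology.continuous_coeff R n).const_mul _

variable [Semiring R]

lemma summable_monomial (c : ℕ → R) {e : ℕ → ℕ} (he : Tendsto e atTop atTop) :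
    Summable fun s ↦ monomial (e s) (c s) := by
  refine WithPiTopology.summable_of_tendsto_order_atTop_nhds_top R ?_
  refine tendsto_nhds_top_mono (ENat.tendsto_natCast_nhds_top.comp he) (.of_forall fun s ↦ ?_)
  exact le_order _ _ fun d hd ↦ by
    rw [coeff_monomial, if_neg (Nat.cast_lt.1 hd).ne]

lemma coeff_tsum_monomial_eq_zero [T2Space R] (c : ℕ → R) {e : ℕ → ℕ}
    (he : Tendsto e atTop atTop) {n : ℕ} (hn : ∀ s, e s ≠ n) :
    coeff n (∑' s, monomial (e s) (c s)) = 0 := by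
  have h := (WithPiTopology.hasSum_iff_hasSum_coeff R).1 (summable_monomial c he).hasSum n
  refine h.unique ?_
  simpa only [coeff_monomial, (hn _).symm, if_false] using hasSum_zero

lemma tendsto_zero_of_X_pow_dvd {f : ℕ → R⟦X⟧} (hf : ∀ n, X ^ n ∣ f n) :
    Tendsto f atTop (𝓝 0) := by
  rw [WithPiTopology.tendsto_iff_coeff_tendsto]
  intro d
  refine tendsto_atTop_of_eventually_const (i₀ := d + 1) fun n hn ↦ ?_
  rw [map_zero]
  exact X_pow_dvd_iff.1 (hf n) d (by lia)

end FormalSeries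

section GaussIdentities

/-- The generating function of partitions into parts not divisible by `ℓ`. -/
noncomputable def regularSeries (ℓ : ℕ) : ℤ⟦X⟧ :=
  mk fun n ↦ (#(Nat.Partition.restricted n (¬ ℓ ∣ ·)) : ℤ)

/-- The series `∑_{s ≥ 1} (-1)ˢ X ^ (s²)`, with the summation index shifted by one. -/
noncomputable def alternatingSquareSeries : ℤ⟦X⟧ :=
  ∑' s : ℕ, monomial ((s + 1) ^ 2) ((-1) ^ (s + 1))

/-- Gauss' theta function `φ(-X) = 1 + 2 ∑_{s ≥ 1} (-1)ˢ X ^ (s²)`. -/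
noncomputable def squareTheta : ℤ⟦X⟧ := 1 + 2 * alternatingSquareSeries

/-- Gauss' theta function `ψ(X) = ∑_{s ≥ 0} X ^ (s * (s + 1) / 2)`. -/
noncomputable def triangleTheta : ℤ⟦X⟧ := ∑' s : ℕ, monomial (s * (s + 1) / 2) 1

lemma tendsto_succ_sq_atTop : Tendsto (fun s : ℕ ↦ (s + 1) ^ 2) atTop atTop :=
  tendsto_atTop_mono (fun s ↦ s.le_succ.trans (Nat.le_self_pow two_ne_zero _)) tendsto_id

lemma tendsto_triangle_atTop : Tendsto (fun s : ℕ ↦ s * (s + 1) / 2) atTop atTop := by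
  refine tendsto_atTop_mono (fun s ↦ ?_) (tendsto_sub_atTop_nat 1)
  rw [Nat.le_div_iff_mul_le two_pos]
  nlinarith [Nat.sub_le s 1, s.le_mul_self]

lemma tendsto_squareSum : Tendsto (fun n ↦ squareSum (X : ℤ⟦X⟧) n) atTop (𝓝 squareTheta) := by
  have term_eq (s : ℕ) : monomial ((s + 1) ^ 2) ((-1 : ℤ) ^ (s + 1)) =
      (-1) ^ (s + 1) * X ^ ((s + 1) ^ 2) := by
    simp [monomial_eq_C_mul_X_pow]
  have h := (summable_monomial (fun s ↦ (-1 : ℤ) ^ (s + 1))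
    tendsto_succ_sq_atTop).hasSum.tendsto_sum_nat
  simp only [term_eq] at h
  simpa only [squareTheta, alternatingSquareSeries, squareSum, term_eq] using
    (h.const_mul 2).const_add 1

lemma tendsto_triangleSum :
    Tendsto (fun n ↦ triangleSum (X : ℤ⟦X⟧) n) atTop (𝓝 triangleTheta) := by
  have h := (summable_monomial (fun _ ↦ (1 : ℤ)) tendsto_triangle_atTop).hasSum.tendsto_sum_nat
  simpa only [triangleTheta, triangleSum, X_pow_eq] using h

lemma tendsto_two_mul_atTop : Tendsto (fun n : ℕ ↦ 2 * n) atTop atTop :=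
  tendsto_id.const_mul_atTop' two_pos

lemma tendsto_eulerProd {F : Type*} [FunLike F ℤ⟦X⟧ ℤ⟦X⟧] [RingHomClass F ℤ⟦X⟧ ℤ⟦X⟧] {f : F}
    (hf : Continuous f) :
    Tendsto (fun n ↦ eulerProd (f X) 0 n) atTop (𝓝 (f (pentagonalSeries ℤ))) := by
  have h := ((WithPiTopology.hasProd_one_sub_X_pow ℤ).map f hf).tendsto_prod_nat
  simpa only [eulerProd, Nat.Ico_zero_eq_range, Function.comp_apply, map_sub, map_one, map_pow]
    using h

lemma tendsto_eulerProd_X :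
    Tendsto (fun n ↦ eulerProd (X : ℤ⟦X⟧) 0 n) atTop (𝓝 (pentagonalSeries ℤ)) :=
  tendsto_eulerProd (f := RingHom.id ℤ⟦X⟧) continuous_id

lemma tendsto_eulerProd_X_pow {k : ℕ} (hk : k ≠ 0) :
    Tendsto (fun n ↦ eulerProd (X ^ k : ℤ⟦X⟧) 0 n) atTop
      (𝓝 (expand k hk (pentagonalSeries ℤ))) := by
  simpa only [expand_X] using tendsto_eulerProd (continuous_expand hk)

lemma tendsto_eulerProd_neg_X :
    Tendsto (fun n ↦ eulerProd (-X : ℤ⟦X⟧) 0 n) atTop (𝓝 (evalNegHom (pentagonalSeries ℤ))) := by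
  simpa only [evalNegHom_X] using tendsto_eulerProd continuous_evalNegHom

lemma pentagonalSeries_ne_zero : pentagonalSeries ℤ ≠ 0 := by
  rw [← WithPiTopology.tprod_one_sub_X_pow]
  exact WithPiTopology.tprod_one_sub_X_pow_ne_zero ℤ

lemma regularSeries_mul_pentagonalSeries {ℓ : ℕ} (hℓ : ℓ ≠ 0) :
    regularSeries ℓ * pentagonalSeries ℤ = expand ℓ hℓ (pentagonalSeries ℤ) := by
  have geom (i : ℕ) : (∑ j ∈ range ℓ, (X : ℤ⟦X⟧) ^ ((i + 1) * j)) * (1 - X ^ (i + 1)) =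
      expand ℓ hℓ (1 - X ^ (i + 1)) := by
    simp only [pow_mul, geom_sum_mul_neg, map_sub, map_one, map_pow, expand_X]
    rw [pow_right_comm]
  have glaisher :=
    Nat.Partition.hasProd_powerSeriesMk_card_countRestricted ℤ (Nat.pos_of_ne_zero hℓ)
  rw [← Nat.Partition.powerSeriesMk_card_restricted_eq_powerSeriesMk_card_countRestricted ℤ
    (Nat.pos_of_ne_zero hℓ)] at glaisher
  have h := glaisher.mul (WithPiTopology.hasProd_one_sub_X_pow ℤ)
  simp only [geom] at h
  exact h.unique ((WithPiTopology.hasProd_one_sub_X_pow ℤ).map _ (continuous_expand hℓ))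

lemma expand_two_pentagonalSeries_mul_squareTheta :
    expand 2 two_ne_zero (pentagonalSeries ℤ) * squareTheta = pentagonalSeries ℤ ^ 2 := by
  refine tendsto_nhds_unique ((tendsto_eulerProd_X_pow two_ne_zero).mul tendsto_squareSum) ?_
  simp only [eulerProd_sq_mul_squareSum]
  simpa only [add_zero, sq] using tendsto_eulerProd_X.mul
    (tendsto_eulerProd_X.add (tendsto_zero_of_X_pow_dvd (pow_dvd_squareError X)))

lemma pentagonalSeries_mul_triangleTheta :
    pentagonalSeries ℤ * triangleTheta = expand 2 two_ne_zero (pentagonalSeries ℤ) ^ 2 := by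
  have tendsto_triangleExpansion : Tendsto (triangleExpansion (X : ℤ⟦X⟧)) atTop
      (𝓝 (expand 2 two_ne_zero (pentagonalSeries ℤ))) := by
    simpa only [sub_add_cancel, zero_add] using
      (tendsto_zero_of_X_pow_dvd (pow_dvd_triangleExpansion_sub X)).add
        (tendsto_eulerProd_X_pow two_ne_zero)
  refine tendsto_nhds_unique ((tendsto_eulerProd_X.comp tendsto_two_mul_atTop).mul
    (tendsto_triangleSum.comp ((tendsto_add_atTop_nat 1).comp tendsto_two_mul_atTop))) ?_
  simp only [Function.comp_apply, eulerProd_mul_triangleSum]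
  simpa only [sq] using (tendsto_eulerProd_X_pow two_ne_zero).mul tendsto_triangleExpansion

lemma evalNegHom_pentagonalSeries_mul_mul_expand :
    evalNegHom (pentagonalSeries ℤ) * pentagonalSeries ℤ *
        expand 4 four_ne_zero (pentagonalSeries ℤ) =
      expand 2 two_ne_zero (pentagonalSeries ℤ) ^ 3 := by
  have sq_lim := tendsto_eulerProd_X_pow two_ne_zero
  refine tendsto_nhds_unique (((tendsto_eulerProd_neg_X.comp tendsto_two_mul_atTop).mul
    (tendsto_eulerProd_X.comp tendsto_two_mul_atTop)).mul (tendsto_eulerProd_X_pow four_ne_zero)) ?_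
  simp only [Function.comp_apply, eulerProd_neg_mul_eulerProd_mul_eulerProd_pow_four]
  simpa only [Function.comp_apply, pow_succ _ 2] using
    (sq_lim.pow 2).mul (sq_lim.comp tendsto_two_mul_atTop)

lemma expand_two_pentagonalSeries_ne_zero :
    expand 2 two_ne_zero (pentagonalSeries ℤ) ≠ 0 := by
  refine left_ne_zero_of_mul (b := squareTheta) ?_
  rw [expand_two_pentagonalSeries_mul_squareTheta]
  exact pow_ne_zero 2 pentagonalSeries_ne_zero

lemma regularSeries_two_pow_three_mul_squareTheta :
    regularSeries 2 ^ 3 * squareTheta = triangleTheta := by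
  refine mul_right_cancel₀
    (mul_ne_zero pentagonalSeries_ne_zero expand_two_pentagonalSeries_ne_zero) ?_
  have hD := congrArg (· ^ 3) (regularSeries_mul_pentagonalSeries two_ne_zero)
  linear_combination regularSeries 2 ^ 3 * pentagonalSeries ℤ *
    expand_two_pentagonalSeries_mul_squareTheta + hD -
    expand 2 two_ne_zero (pentagonalSeries ℤ) * pentagonalSeries_mul_triangleTheta

lemma triangleTheta_mul_squareTheta :
    triangleTheta * squareTheta =
      pentagonalSeries ℤ * expand 2 two_ne_zero (pentagonalSeries ℤ) := by
  refine mul_left_cancel₀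
    (mul_ne_zero pentagonalSeries_ne_zero expand_two_pentagonalSeries_ne_zero) ?_
  rw [mul_mul_mul_comm, pentagonalSeries_mul_triangleTheta,
    expand_two_pentagonalSeries_mul_squareTheta]
  ring

lemma evalNegHom_triangleTheta_mul_expand_two_squareTheta :
    evalNegHom triangleTheta * expand 2 two_ne_zero squareTheta =
      triangleTheta * squareTheta := by
  set E := pentagonalSeries ℤ
  set E₂ := expand 2 two_ne_zero E
  set E₄ := expand 4 four_ne_zero E
  have triangle_neg : evalNegHom E * evalNegHom triangleTheta = E₂ ^ 2 := by
    rw [← map_mul, pentagonalSeries_mul_triangleTheta, map_pow,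
      evalNegHom_expand_of_even _ even_two]
  have square_expand : E₄ * expand 2 two_ne_zero squareTheta = E₂ ^ 2 := by
    rw [← map_pow, ← expand_two_pentagonalSeries_mul_squareTheta, map_mul,
      ← expand_mul 2 two_ne_zero 2 two_ne_zero]
  have euler : evalNegHom E * E * E₄ = E₂ ^ 3 := evalNegHom_pentagonalSeries_mul_mul_expand
  have cancel : E₂ ^ 3 * (evalNegHom triangleTheta * expand 2 two_ne_zero squareTheta) =
      E₂ ^ 3 * (E * E₂) :=
    calc
      _ = E * (evalNegHom E * evalNegHom triangleTheta) *
          (E₄ * expand 2 two_ne_zero squareTheta) := by rw [← euler]; ring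
      _ = E₂ ^ 3 * (E * E₂) := by rw [triangle_neg, square_expand]; ring
  rw [triangleTheta_mul_squareTheta]
  exact mul_left_cancel₀ (pow_ne_zero 3 expand_two_pentagonalSeries_ne_zero) cancel

end GaussIdentities

section Congruences

lemma eight_dvd_squareTheta_sq_sub :
    (8 : ℤ⟦X⟧) ∣ squareTheta ^ 2 - 2 * squareTheta * expand 2 two_ne_zero squareTheta + 1 := by
  obtain ⟨g, hg⟩ := natCast_dvd_pow_sub_expand 2 alternatingSquareSeries
  have expand_theta : expand 2 two_ne_zero squareTheta =
      1 + 2 * expand 2 two_ne_zero alternatingSquareSeries := by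
    simp only [squareTheta, map_add, map_mul, map_one, map_ofNat]
  refine ⟨g - alternatingSquareSeries * expand 2 two_ne_zero alternatingSquareSeries, ?_⟩
  rw [Nat.cast_ofNat] at hg
  rw [expand_theta, squareTheta]
  linear_combination 4 * hg

lemma eight_dvd_regularSeries_two_pow_three_sub :
    (8 : ℤ⟦X⟧) ∣ regularSeries 2 ^ 3 -
      expand 2 two_ne_zero squareTheta * (2 * triangleTheta - evalNegHom triangleTheta) := by
  have factor : regularSeries 2 ^ 3 -
        expand 2 two_ne_zero squareTheta * (2 * triangleTheta - evalNegHom triangleTheta) =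
      regularSeries 2 ^ 3 *
        (squareTheta ^ 2 - 2 * squareTheta * expand 2 two_ne_zero squareTheta + 1) := by
    rw [mul_sub, mul_comm _ (evalNegHom _), evalNegHom_triangleTheta_mul_expand_two_squareTheta,
      ← regularSeries_two_pow_three_mul_squareTheta]
    ring
  rw [factor]
  exact eight_dvd_squareTheta_sq_sub.mul_left _

lemma coeff_squareTheta_eq_zero {n : ℕ} (hn : ∀ b, b ^ 2 ≠ n) : coeff n squareTheta = 0 := by
  have coeff_alternating : coeff n alternatingSquareSeries = 0 :=
    coeff_tsum_monomial_eq_zero _ tendsto_succ_sq_atTop fun s ↦ hn (s + 1)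
  rw [squareTheta, two_mul, map_add, map_add, coeff_alternating, coeff_one,
    if_neg fun h ↦ hn 0 h.symm, add_zero, add_zero]

lemma coeff_triangleTheta_eq_zero {n : ℕ} (hn : ∀ k, k * (k + 1) / 2 ≠ n) :
    coeff n triangleTheta = 0 :=
  coeff_tsum_monomial_eq_zero _ tendsto_triangle_atTop hn

lemma coeff_expand_two_squareTheta_mul_eq_zero {n : ℕ} (hn : ∀ x y : ℕ, x ^ 2 + y ^ 2 ≠ 8 * n + 1) :
    coeff n (expand 2 two_ne_zero squareTheta *
      (2 * triangleTheta - evalNegHom triangleTheta)) = 0 := by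
  rw [coeff_mul]
  refine sum_eq_zero fun ⟨i, j⟩ hij ↦ ?_
  obtain rfl : i + j = n := mem_antidiagonal.1 hij
  by_cases hj : ∃ k, k * (k + 1) / 2 = j
  · obtain ⟨k, rfl⟩ := hj
    refine mul_eq_zero_of_left ?_ _
    rw [coeff_expand]
    refine ite_eq_right_iff.2 fun ⟨c, hc⟩ ↦ coeff_squareTheta_eq_zero fun b hb ↦ ?_
    have square_eq : 2 * b ^ 2 = i := by lia
    have triangle_eq : 2 * (k * (k + 1) / 2) = k * (k + 1) :=
      Nat.mul_div_cancel' (Nat.even_mul_succ_self k).two_dvd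
    exact hn (4 * b) (2 * k + 1) (by linear_combination 8 * square_eq - 4 * triangle_eq)
  · have coeff_triangle : coeff j triangleTheta = 0 :=
      coeff_triangleTheta_eq_zero fun k hk ↦ hj ⟨k, hk⟩
    simp only [two_mul, map_sub, map_add, coeff_evalNegHom, coeff_triangle, mul_zero, add_zero,
      sub_zero]

lemma eight_dvd_coeff_regularSeries_two_pow_three {n : ℕ}
    (hn : ∀ x y : ℕ, x ^ 2 + y ^ 2 ≠ 8 * n + 1) : 8 ∣ coeff n (regularSeries 2 ^ 3) := by
  have h := natCast_dvd_iff_forall_natCast_dvd_coeff (m := 8).1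
    eight_dvd_regularSeries_two_pow_three_sub n
  rwa [map_sub, coeff_expand_two_squareTheta_mul_eq_zero hn, sub_zero] at h

/-- Sorts the tuples of `ℓ`-regular partitions counted by `Tcount ℓ k n` according to the sizes of
their entries. -/
def regularTupleEquiv (ℓ k n : ℕ) :
    {f : Fin k → Σ m : ℕ, Nat.Partition m //
      (∑ i, (f i).1) = n ∧ ∀ i, ∀ p ∈ (f i).2.parts, ¬ ℓ ∣ p} ≃
    Σ l : piAntidiag (univ : Finset (Fin k)) n,
      ∀ i, Nat.Partition.restricted (l.1 i) (¬ ℓ ∣ ·) where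
  toFun f := ⟨⟨fun i ↦ (f.1 i).1, mem_piAntidiag.2 ⟨f.2.1, fun i _ ↦ mem_univ i⟩⟩,
    fun i ↦ ⟨(f.1 i).2, mem_filter.2 ⟨mem_univ _, f.2.2 i⟩⟩⟩
  invFun g := ⟨fun i ↦ ⟨g.1.1 i, (g.2 i).1⟩, (mem_piAntidiag.1 g.1.2).1,
    fun i ↦ (mem_filter.1 (g.2 i).2).2⟩

lemma natCast_Tcount (ℓ k n : ℕ) : (Tcount ℓ k n : ℤ) = coeff n (regularSeries ℓ ^ k) := by
  have pow_eq_prod : regularSeries ℓ ^ k = ∏ _i : Fin k, regularSeries ℓ := by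
    rw [prod_const, card_univ, Fintype.card_fin]
  rw [pow_eq_prod, coeff_prod_eq_sum_piAntidiag, Tcount, Nat.card_congr (regularTupleEquiv ℓ k n),
    Nat.card_sigma]
  simp only [Nat.card_pi, Nat.card_eq_finsetCard, regularSeries, coeff_mk, Nat.cast_sum,
    Nat.cast_prod]
  exact sum_coe_sort (piAntidiag univ n)
    fun l ↦ ∏ i, (#(Nat.Partition.restricted (l i) (¬ ℓ ∣ ·)) : ℤ)

lemma prime_dvd_Tcount {p : ℕ} (hp : p.Prime) (ℓ : ℕ) {n : ℕ} (hn : ¬ p ∣ n) :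
    p ∣ Tcount ℓ p n := by
  rw [← Int.natCast_dvd_natCast, natCast_Tcount]
  exact natCast_dvd_coeff_pow hp hn _

lemma eight_dvd_Tcount_two_three {n : ℕ} (hn : ∀ x y : ℕ, x ^ 2 + y ^ 2 ≠ 8 * n + 1) :
    8 ∣ Tcount 2 3 n := by
  rw [← Int.natCast_dvd_natCast, natCast_Tcount]
  exact eight_dvd_coeff_regularSeries_two_pow_three hn

lemma sq_add_sq_ne_nine_mul_add_three (x y m : ℕ) : x ^ 2 + y ^ 2 ≠ 9 * m + 3 := by
  have residues : ∀ a b : ZMod 9, a ^ 2 + b ^ 2 ≠ 3 := by decide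
  intro h
  have nine_eq_zero : (9 : ZMod 9) = 0 := rfl
  apply residues x y
  have h' := congrArg (Nat.cast : ℕ → ZMod 9) h
  push_cast at h'
  rwa [nine_eq_zero, zero_mul, zero_add] at h'

end Congruences

theorem stmt4_general {n : ℕ} (h3 : ¬ 3 ∣ n) (h : ∀ x y : ℕ, x ^ 2 + y ^ 2 ≠ 8 * n + 1) :
    24 ∣ Tcount 2 3 n :=
  Nat.Coprime.mul_dvd_of_dvd_of_dvd (by norm_num) (prime_dvd_Tcount Nat.prime_three 2 h3)
    (eight_dvd_Tcount_two_three h)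

theorem stmt4 (n : ℕ) : 24 ∣ Tcount 2 3 (9 * n + 7) := by
  refine stmt4_general (by lia) fun x y h ↦ sq_add_sq_ne_nine_mul_add_three x y (8 * n + 6) ?_
  lia
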